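/- For every non-computable set C, every left-full computable instance T of the cross-constraint problem has a solution (X^i, Y^i)_{i<2} such that (X⁰,Y⁰) ⊕ (X¹,Y¹) does not compute C. -/

import Mathlib

namespace Paper

/-- Codes for oracle Turing machines. -/
inductive OCode : Type
  | zero | succ | left | right | oracle
  | pair (a b : OCode) | comp (a b : OCode) | prec (a b : OCode) | rfind' (a : OCode)

/-- Evaluation of an oracle code with oracle `O`. -/
def oeval (O : ℕ → ℕ) : OCode → ℕ →. ℕ
  | .zero => pure 0
  | .succ => Nat.succ
  | .left => ↑fun n : ℕ => n.unpair.1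
  | .right => ↑fun n : ℕ => n.unpair.2
  | .oracle => ↑fun n : ℕ => O n
  | .pair cf cg => fun n => Nat.pair <$> oeval O cf n <*> oeval O cg n
  | .comp cf cg => fun n => oeval O cg n >>= oeval O cf
  | .prec cf cg =>
    Nat.unpaired fun a n =>
      n.rec (oeval O cf a) fun y IH => do
        let i ← IH
        oeval O cg (Nat.pair a (Nat.pair y i))
  | .rfind' cf =>
    Nat.unpaired fun a m =>
      (Nat.rfind fun n => (fun m => m = 0) <$> oeval O cf (Nat.pair a (n + m))).map (· + m)

/-- A numbering of oracle codes. -/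
def encodeOCode : OCode → ℕ
  | .zero => 0
  | .succ => 1
  | .left => 2
  | .right => 3
  | .oracle => 4
  | .pair a b => 4 * Nat.pair (encodeOCode a) (encodeOCode b) + 5
  | .comp a b => 4 * Nat.pair (encodeOCode a) (encodeOCode b) + 6
  | .prec a b => 4 * Nat.pair (encodeOCode a) (encodeOCode b) + 7
  | .rfind' a => 4 * encodeOCode a + 8

/-- The Turing jump of an oracle. -/
def jump (O : ℕ → ℕ) : Set ℕ :=
  { n | ∃ c : OCode, encodeOCode c = n.unpair.1 ∧ (oeval O c n.unpair.2).Dom }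

/-- `f` is (total) recursive in the oracle `O`. -/
def RecIn (O : ℕ → ℕ) (f : ℕ → ℕ) : Prop :=
  ∃ c : OCode, ∀ n, oeval O c n = Part.some (f n)

/-- The all-zero (trivial, computable) oracle. -/
def zeroO : ℕ → ℕ := fun _ => 0

/-- Characteristic function of a set of naturals. -/
noncomputable def chi (A : Set ℕ) : ℕ → ℕ := A.indicator fun _ => 1

/-- Turing join of two oracles. -/
def joinF (f g : ℕ → ℕ) : ℕ → ℕ := fun n => if n % 2 = 0 then f (n / 2) else g (n / 2)

/-- `A` is Σ⁰₁ relative to the oracle `O` (c.e. in `O`). -/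
def SigmaIn (O : ℕ → ℕ) (A : Set ℕ) : Prop :=
  ∃ c : OCode, ∀ n, n ∈ A ↔ (oeval O c n).Dom

/-- The halting problem `∅′`. -/
noncomputable def emptyJump : Set ℕ := jump zeroO

end Paper
namespace Paper

abbrev Str3 := List (Fin 3)
abbrev StrTup (r : ℕ) := Fin r → List (Fin 2)

/-- A cross-tree `T ⊆ 3^{<ℕ} × (2^{<ℕ})^r`. -/
structure CrossTree (r : ℕ) where
  mem : Set (Str3 × StrTup r)
  len_eq : ∀ p ∈ mem, ∀ i j : Fin r, (p.2 i).length = (p.2 j).length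
  len_le : ∀ p ∈ mem, ∀ i : Fin r, (p.2 i).length ≤ p.1.length
  closed : ∀ p ∈ mem, ∀ q : Str3 × StrTup r, q.1 <+: p.1 → (∀ i, q.2 i <+: p.2 i) →
    (∀ i j : Fin r, (q.2 i).length = (q.2 j).length) →
    (∀ i : Fin r, (q.2 i).length ≤ q.1.length) → q ∈ mem

/-- Length-`n` initial segment of an infinite sequence. -/
def seg {α : Type} (X : ℕ → α) (n : ℕ) : List α := List.ofFn fun i : Fin n => X i

/-- `(X, Y)` is an infinite path of the cross-tree `T`. -/
def IsPath {r : ℕ} (T : CrossTree r) (X : ℕ → Fin 3) (Y : Fin r → ℕ → Fin 2) : Prop :=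
  ∀ n, (seg X n, fun i => seg (Y i) n) ∈ T.mem

/-- The infinite sequence `X` extends the finite string `ρ`. -/
def ExtendsL {α : Type} (X : ℕ → α) (ρ : List α) : Prop :=
  ∀ i : Fin ρ.length, X i = ρ.get i

/-- `T` is left-full below `(ρ, σ)`. -/
def LeftFullBelow {r : ℕ} (T : CrossTree r) (ρ : Str3) (σ : StrTup r) : Prop :=
  ∀ X : ℕ → Fin 3, ExtendsL X ρ →
    ∃ Y : Fin r → ℕ → Fin 2, (∀ i, ExtendsL (Y i) (σ i)) ∧ IsPath T X Y

/-- `T` is left-full (below the pair of empty stems). -/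
def LeftFull {r : ℕ} (T : CrossTree r) : Prop := LeftFullBelow T [] fun _ => []

/-- Encoding of nodes of a cross-tree as natural numbers. -/
def encNode {r : ℕ} (p : Str3 × StrTup r) : ℕ :=
  Nat.pair (Encodable.encode p.1) (Encodable.encode (List.ofFn p.2))

/-- The cross-tree `T` is computable. -/
def TreeComputable {r : ℕ} (T : CrossTree r) : Prop :=
  RecIn zeroO (chi {n | ∃ p ∈ T.mem, encNode p = n})

/-- A solution to the cross-constraint problem on instance `T`: a pair of paths whose
first components are finitely compatible and whose second components are pairwise
infinitely compatible. -/
def CCSolution {r : ℕ} (T : CrossTree r) (X : Fin 2 → ℕ → Fin 3)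
    (Y : Fin 2 → Fin r → ℕ → Fin 2) : Prop :=
  (∀ i : Fin 2, IsPath T (X i) (Y i)) ∧
  (∀ j : Fin 3, {n | X 0 n = j ∧ X 1 n = j}.Finite) ∧
  (∀ s : Fin r, ∃ j : Fin 2, {n | Y 0 s n = j ∧ Y 1 s n = j}.Infinite)

/-- Oracle encoding a path `(X, Y)` of a cross-tree. -/
def solOracle {r : ℕ} (X : ℕ → Fin 3) (Y : Fin r → ℕ → Fin 2) : ℕ → ℕ := fun n =>
  if n.unpair.1 = 0 then (X n.unpair.2 : ℕ)
  else if h : n.unpair.1 - 1 < r then (Y ⟨n.unpair.1 - 1, h⟩ n.unpair.2 : ℕ) else 0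

end Paper

namespace Paper

/-- Prefix of length `k` of an infinite sequence, as a list. -/
def pre {L : Type} (z : ℕ → L) (k : ℕ) : List L := (List.range k).map z

@[simp] theorem pre_length {L : Type} (z : ℕ → L) (k : ℕ) : (pre z k).length = k := by
  simp [pre]

theorem pre_take {L : Type} (z : ℕ → L) {k m : ℕ} (h : k ≤ m) : (pre z m).take k = pre z k := by
  simp [pre, ← List.map_take, List.take_range, Nat.min_eq_left h]

theorem pre_isPre {L : Type} (z : ℕ → L) {k m : ℕ} (h : k ≤ m) : pre z k <+: pre z m := by
  rw [← pre_take z h]; exact List.take_prefix _ _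

theorem pre_getD {L : Type} (z : ℕ → L) {k i : ℕ} (h : i < k) (d : L) : (pre z k).getD i d = z i := by
  simp [pre, List.getD, h]

theorem pre_getD_ge {L : Type} (z : ℕ → L) {k i : ℕ} (h : k ≤ i) (d : L) : (pre z k).getD i d = d := by
  simp [pre, List.getD, h]

theorem pre_congr {L : Type} {z w : ℕ → L} {k : ℕ} (h : ∀ i < k, z i = w i) : pre z k = pre w k := by
  simp only [pre]
  apply List.map_congr_left
  intro a ha
  exact h a (List.mem_range.1 ha)

theorem pre_eq_seg {L : Type} (z : ℕ → L) (k : ℕ) : pre z k = seg z k := by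
  apply List.ext_getElem <;> simp [pre, seg]

/-- Effectively open predicates (lightface `Σ⁰₁`), uniformly in a parameter. -/
def Sig {α L : Type} [Primcodable α] [Primcodable L] (U : α → (ℕ → L) → Prop) : Prop :=
  ∃ R : α × List L → Prop, PrimrecPred R ∧
    (∀ a l l', l <+: l' → R (a, l) → R (a, l')) ∧ ∀ a z, U a z ↔ ∃ k, R (a, pre z k)

section
set_option linter.unusedSectionVars false
variable {α β L M A : Type} [Primcodable α] [Primcodable β] [Primcodable L] [Primcodable M]
  [Primcodable A]

theorem Sig.ofRE {W : α × List L → Prop} (hW : REPred W) :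
    Sig (fun a z => ∃ k, W (a, pre z k)) := by
  obtain ⟨c, hc⟩ := Nat.Partrec.Code.exists_code.1 hW
  have hdom : ∀ x, W x ↔ ∃ j, ((Nat.Partrec.Code.evaln j c (Encodable.encode x)).isSome = true) := by
    intro x
    have h1 : W x ↔ (Nat.Partrec.Code.eval c (Encodable.encode x)).Dom := by
      rw [hc]; simp [Part.assert]
    rw [h1, Part.dom_iff_mem]
    constructor
    · rintro ⟨y, hy⟩
      obtain ⟨k, hk⟩ := Nat.Partrec.Code.evaln_complete.1 hy
      exact ⟨k, by rw [Option.mem_def.1 hk]; rfl⟩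
    · rintro ⟨j, hj⟩
      obtain ⟨y, hy⟩ := Option.isSome_iff_exists.1 hj
      exact ⟨y, Nat.Partrec.Code.evaln_complete.2 ⟨j, hy⟩⟩
  have hmono : ∀ x j j', j ≤ j' → (Nat.Partrec.Code.evaln j c (Encodable.encode x : ℕ)).isSome = true →
      (Nat.Partrec.Code.evaln j' c (Encodable.encode (x : α × List L))).isSome = true := by
    intro x j j' hj h
    obtain ⟨y, hy⟩ := Option.isSome_iff_exists.1 h
    rw [Option.mem_def.1 (Nat.Partrec.Code.evaln_mono hj hy)]; rfl
  refine ⟨fun p => ∃ k < p.2.length + 1,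
    (Nat.Partrec.Code.evaln p.2.length c (Encodable.encode (p.1, p.2.take k))).isSome = true,
    ?_, ?_, ?_⟩
  · have h1 : PrimrecRel (fun (k : ℕ) (p : α × List L) =>
      (Nat.Partrec.Code.evaln p.2.length c (Encodable.encode (p.1, p.2.take k))).isSome = true) := by
      refine Primrec.eq.comp (Primrec.option_isSome.comp (Nat.Partrec.Code.primrec_evaln.comp
        (Primrec.pair (Primrec.pair (Primrec.list_length.comp (Primrec.snd.comp Primrec.snd))
          (Primrec.const c)) (Primrec.encode.comp (Primrec.pair (Primrec.fst.comp Primrec.snd)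
            (Primrec.list_take.comp Primrec.fst (Primrec.snd.comp Primrec.snd)))))))
        (Primrec.const true)
    have h2 := (PrimrecRel.exists_mem_list h1).comp (Primrec.list_range.comp
      (Primrec.succ.comp (Primrec.list_length.comp (Primrec.snd (α := α) (β := List L)))))
      Primrec.id
    exact h2.of_eq (fun p => by simp)
  · rintro a l l' ⟨t, rfl⟩ ⟨k, hk, h⟩
    refine ⟨k, by simp at hk ⊢; omega, ?_⟩
    have : (l ++ t).take k = l.take k := by
      rw [List.take_append_of_le_length (Nat.lt_succ_iff.1 hk)]
    simp only [this]
    exact hmono _ _ _ (by simp) h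
  · intro a z
    constructor
    · rintro ⟨k, hk⟩
      obtain ⟨j, hj⟩ := (hdom _).1 hk
      refine ⟨max k j, k, by simp, ?_⟩
      simp only [pre_length]
      rw [pre_take z (le_max_left _ _)]
      exact hmono _ _ _ (le_max_right _ _) hj
    · rintro ⟨K, k, hk, h⟩
      simp only [pre_length] at hk h
      rw [pre_take z (by omega)] at h
      exact ⟨k, (hdom _).2 ⟨_, h⟩⟩

theorem PrimrecPred.toRE {p : α → Prop} (hp : PrimrecPred p) : REPred p := by
  obtain ⟨_, h⟩ := hp
  exact ComputablePred.to_re ⟨inferInstance, h.to_comp⟩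

theorem Sig.mk' {R : α × List L → Prop} (hR : PrimrecPred R) :
    Sig (fun a z => ∃ k, R (a, pre z k)) := Sig.ofRE (PrimrecPred.toRE hR)

theorem Sig.congr {U V : α → (ℕ → L) → Prop} (hU : Sig U) (h : ∀ a z, U a z ↔ V a z) : Sig V := by
  obtain ⟨R, h1, h2, h3⟩ := hU
  exact ⟨R, h1, h2, fun a z => (h a z).symm.trans (h3 a z)⟩

theorem Sig.or {U V : α → (ℕ → L) → Prop} (hU : Sig U) (hV : Sig V) :
    Sig (fun a z => U a z ∨ V a z) := by
  obtain ⟨R, h1, h2, h3⟩ := hU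
  obtain ⟨R', h1', h2', h3'⟩ := hV
  refine ⟨fun p => R p ∨ R' p, h1.or h1', fun a l l' h => Or.imp (h2 a l l' h) (h2' a l l' h), ?_⟩
  intro a z
  simp only [h3, h3', ← exists_or]

theorem Sig.opn {U : α → (ℕ → L) → Prop} (hU : Sig U) {a : α} {z : ℕ → L} (h : U a z) :
    ∃ k, ∀ w : ℕ → L, (∀ i < k, w i = z i) → U a w := by
  obtain ⟨R, h1, h2, h3⟩ := hU
  obtain ⟨k, hk⟩ := (h3 a z).1 h
  exact ⟨k, fun w hw => (h3 a w).2 ⟨k, by rwa [pre_congr hw]⟩⟩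

theorem Sig.subst {U : β → (ℕ → M) → Prop} (hU : Sig U) {φ : α → β} (hφ : Primrec φ)
    {h : α × ℕ × List L → M} (hh : Primrec h) :
    Sig (fun a z => U (φ a) (fun i => h (a, i, pre z (i + 1)))) := by
  obtain ⟨R, h1, h2, h3⟩ := hU
  have key : ∀ a (z : ℕ → L) k, (List.range (pre z k).length).map
      (fun i => h (a, i, (pre z k).take (i + 1))) = pre (fun i => h (a, i, pre z (i + 1))) k := by
    intro a z k
    simp only [pre_length]
    conv_rhs => rw [pre]
    apply List.map_congr_left
    intro i hi
    rw [pre_take z (List.mem_range.1 hi)]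
  refine (Sig.mk' (R := fun p : α × List L => R (φ p.1, (List.range p.2.length).map
      (fun i => h (p.1, i, p.2.take (i + 1))))) ?_).congr ?_
  · refine h1.comp (Primrec.pair (hφ.comp Primrec.fst) (Primrec.list_map
      (Primrec.list_range.comp (Primrec.list_length.comp Primrec.snd)) ?_))
    exact hh.comp (Primrec.pair (Primrec.fst.comp Primrec.fst) (Primrec.pair Primrec.snd
      (Primrec.list_take.comp (Primrec.succ.comp Primrec.snd) (Primrec.snd.comp Primrec.fst))))
  · intro a z
    rw [h3]
    simp only [key]

theorem Sig.substL [Inhabited L] {U : β → (ℕ → M) → Prop} (hU : Sig U) {φ : α → β} (hφ : Primrec φ)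
    {g : α × ℕ × L → M} (hg : Primrec g) :
    Sig (fun a z => U (φ a) (fun i => g (a, i, z i))) := by
  refine (hU.subst hφ (h := fun p : α × ℕ × List L => g (p.1, p.2.1, p.2.2.getD p.2.1 default))
    ?_).congr ?_
  · exact hg.comp (Primrec.pair Primrec.fst (Primrec.pair (Primrec.fst.comp Primrec.snd)
      ((Primrec.list_getD default).comp (Primrec.snd.comp Primrec.snd)
        (Primrec.fst.comp Primrec.snd))))
  · intro a z
    simp only [pre_getD z (Nat.lt_succ_self _)]

/-- Zip of two strings (with defaults). -/
def zipL [Inhabited L] [Inhabited A] (l : List L) (w : List A) : List (L × A) :=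
  (List.range l.length).map fun i => (l.getD i default, w.getD i default)

theorem zipL_primrec [Inhabited L] [Inhabited A] : Primrec₂ (zipL (L := L) (A := A)) := by
  refine Primrec.list_map (Primrec.list_range.comp (Primrec.list_length.comp Primrec.fst)) ?_
  exact Primrec.pair ((Primrec.list_getD default).comp (Primrec.fst.comp Primrec.fst) Primrec.snd)
    ((Primrec.list_getD default).comp (Primrec.snd.comp Primrec.fst) Primrec.snd)

theorem zipL_pre [Inhabited L] [Inhabited A] (z : ℕ → L) (w : ℕ → A) (k : ℕ) :
    zipL (pre z k) (pre w k) = pre (fun i => (z i, w i)) k := by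
  simp only [zipL, pre_length]
  conv_rhs => rw [pre]
  apply List.map_congr_left
  intro i hi
  rw [pre_getD z (List.mem_range.1 hi), pre_getD w (List.mem_range.1 hi)]

/-- All strings of length `n` over a finite alphabet. -/
noncomputable def allStr (A : Type) [Fintype A] (n : ℕ) : List (List A) :=
  n.rec [[]] fun _ ih => ih.flatMap fun w => (Finset.univ : Finset A).toList.map fun x => w ++ [x]

theorem allStr_primrec [Fintype A] : Primrec (allStr A) := by
  refine Primrec.nat_rec' (f := fun n : ℕ => n) (g := fun _ => [[]]) Primrec.id (Primrec.const _)
    (h := fun _ (p : ℕ × List (List A)) => p.2.flatMap fun w =>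
      (Finset.univ : Finset A).toList.map fun x => w ++ [x]) ?_
  refine Primrec.list_flatMap (Primrec.snd.comp Primrec.snd) ?_
  refine Primrec.list_map (Primrec.const _) ?_
  exact Primrec.list_append.comp (Primrec.snd.comp Primrec.fst)
    (Primrec.list_cons.comp Primrec.snd (Primrec.const []))

theorem pre_succ (w : ℕ → A) (n : ℕ) : pre w (n + 1) = pre w n ++ [w n] := by
  simp [pre, List.range_succ]

theorem pre_mem_allStr [Fintype A] (w : ℕ → A) (n : ℕ) : pre w n ∈ allStr A n := by
  induction n with
  | zero => simp [pre, allStr]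
  | succ n ih =>
    rw [pre_succ]
    simp only [allStr, List.mem_flatMap, List.mem_map]
    exact ⟨_, ih, w n, by simp, rfl⟩

theorem mem_allStr [Fintype A] {l : List A} {n : ℕ} (h : l ∈ allStr A n) : l.length = n := by
  induction n generalizing l with
  | zero => simp [allStr] at h; simp [h]
  | succ n ih =>
    simp only [allStr, List.mem_flatMap, List.mem_map] at h
    obtain ⟨w, hw, x, -, rfl⟩ := h
    simp [ih hw]

theorem eq_pre [Inhabited A] (l : List A) : l = pre (fun i => l.getD i default) l.length := by
  apply List.ext_getElem
  · simp
  · intro i h1 h2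
    simp [pre, h1]

theorem Sig.ex [Inhabited L] [Inhabited A] [Fintype A] {U : α → (ℕ → L × A) → Prop} (hU : Sig U) :
    Sig (fun a z => ∃ w : ℕ → A, U a (fun i => (z i, w i))) := by
  obtain ⟨R, h1, h2, h3⟩ := hU
  refine (Sig.mk' (R := fun p : α × List L => ∃ w ∈ allStr A p.2.length, R (p.1, zipL p.2 w))
    ?_).congr ?_
  · have : PrimrecRel (fun (w : List A) (p : α × List L) => R (p.1, zipL p.2 w)) :=
      h1.comp (Primrec.pair (Primrec.fst.comp Primrec.snd)
        (zipL_primrec.comp (Primrec.snd.comp Primrec.snd) Primrec.fst))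
    exact this.exists_mem_list.comp (allStr_primrec.comp (Primrec.list_length.comp Primrec.snd))
      Primrec.id
  · intro a z
    simp only [pre_length, h3]
    constructor
    · rintro ⟨k, w, hw, h⟩
      refine ⟨fun i => w.getD i default, k, ?_⟩
      have := eq_pre w
      rw [mem_allStr hw] at this
      rw [this, zipL_pre] at h
      exact h
    · rintro ⟨w, k, h⟩
      exact ⟨k, pre w k, pre_mem_allStr _ _, by rwa [zipL_pre]⟩

theorem isOpen_of_local {A : Type} [TopologicalSpace A] [DiscreteTopology A] {S : Set (ℕ → A)}
    (h : ∀ w ∈ S, ∃ k, ∀ w' : ℕ → A, (∀ i < k, w' i = w i) → w' ∈ S) : IsOpen S := by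
  rw [isOpen_iff_forall_mem_open]
  intro w hw
  obtain ⟨k, hk⟩ := h w hw
  refine ⟨Set.pi (Finset.range k : Set ℕ) (fun i => {w i}), ?_, ?_, ?_⟩
  · intro w' hw'
    exact hk w' (fun i hi => by simpa using hw' i (by simpa using hi))
  · exact isOpen_set_pi (Finset.finite_toSet _) (fun i _ => isOpen_discrete _)
  · intro i _; rfl

theorem compact_unif {A : Type} [Finite A] {S : ℕ → (ℕ → A) → Prop}
    (hmono : ∀ k k' w, k ≤ k' → S k w → S k' w)
    (hloc : ∀ k w w', (∀ i < k, w' i = w i) → S k w → S k w')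
    (hall : ∀ w, ∃ k, S k w) : ∃ k, ∀ w, S k w := by
  let _ : TopologicalSpace A := ⊥
  have : DiscreteTopology A := ⟨rfl⟩
  have hc : IsCompact (Set.univ : Set (ℕ → A)) := isCompact_univ
  obtain ⟨k, hk⟩ := hc.elim_directed_cover (fun k => {w | S k w})
    (fun k => isOpen_of_local (fun w hw => ⟨k, fun w' h => hloc k w w' h hw⟩))
    (fun w _ => Set.mem_iUnion.2 (hall w))
    (Monotone.directed_le (fun k k' h w hw => hmono k k' w h hw))
  exact ⟨k, fun w => hk (Set.mem_univ w)⟩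

theorem Sig.all [Inhabited L] [Inhabited A] [Fintype A] {U : α → (ℕ → L × A) → Prop} (hU : Sig U) :
    Sig (fun a z => ∀ w : ℕ → A, U a (fun i => (z i, w i))) := by
  obtain ⟨R, h1, h2, h3⟩ := hU
  refine (Sig.mk' (R := fun p : α × List L => ∀ w ∈ allStr A p.2.length, R (p.1, zipL p.2 w))
    ?_).congr ?_
  · have : PrimrecRel (fun (w : List A) (p : α × List L) => R (p.1, zipL p.2 w)) :=
      h1.comp (Primrec.pair (Primrec.fst.comp Primrec.snd)
        (zipL_primrec.comp (Primrec.snd.comp Primrec.snd) Primrec.fst))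
    exact this.forall_mem_list.comp (allStr_primrec.comp (Primrec.list_length.comp Primrec.snd))
      Primrec.id
  · intro a z
    simp only [pre_length, h3]
    constructor
    · rintro ⟨k, h⟩ w
      refine ⟨k, ?_⟩
      rw [← zipL_pre]
      exact h _ (pre_mem_allStr _ _)
    · intro h
      obtain ⟨k, hk⟩ := compact_unif (S := fun k w => R (a, pre (fun i => (z i, w i)) k))
        (fun k k' w hkk h => h2 _ _ _ (pre_isPre _ hkk) h)
        (fun k w w' hw h => by
          rwa [pre_congr (w := fun i => (z i, w i))]
          intro i hi; rw [hw i hi]) h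
      refine ⟨k, fun w hw => ?_⟩
      have := eq_pre w
      rw [mem_allStr hw] at this
      rw [this, zipL_pre]
      exact hk _

theorem countable_primrecPred : Countable {R : α → Prop // PrimrecPred R} := by
  have : ∀ R : {R : α → Prop // PrimrecPred R}, ∃ c : Nat.Partrec.Code,
      ∀ x, Nat.Partrec.Code.eval c (Encodable.encode x) = Part.some (by
        classical exact Encodable.encode (decide (R.1 x))) := by
    rintro ⟨R, hd, hR⟩
    obtain ⟨c, hc⟩ := Nat.Partrec.Code.exists_code.1 hR.to_comp
    refine ⟨c, fun x => ?_⟩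
    rw [hc]
    simp
  choose F hF using this
  refine Function.Injective.countable (f := F) ?_
  intro R S h
  apply Subtype.ext
  funext x
  have h1 := hF R x
  rw [h, hF S x] at h1
  have h2 := Encodable.encode_injective (Part.some_injective h1)
  simpa using h2.symm

end

end Paper
namespace Paper

/-- Alphabet for the tuple of binary sequences. -/
abbrev YL (r : ℕ) := Fin r → Fin 2
/-- Alphabet for an oracle together with a path. -/
abbrev Lt (r : ℕ) := ℕ × Fin 3 × YL r
/-- Sequence over three colors. -/
abbrev SX := ℕ → Fin 3
/-- Sequence of tuples of bits. -/
abbrev SY (r : ℕ) := ℕ → YL r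

/-- `X` extends the string `ρ`. -/
def Ext (X : SX) (ρ : List (Fin 3)) : Prop := ∀ n < ρ.length, X n = ρ.getD n 0

/-- Overlay of the string `ρ` on `X`. -/
def ov {A : Type} (ρ : List A) (X : ℕ → A) : ℕ → A := fun n => ρ.getD n (X n)

/-- `ρ'` semantically extends `ρ`. -/
def Le (ρ ρ' : List (Fin 3)) : Prop := ∀ X, Ext X ρ' → Ext X ρ

theorem Le.refl (ρ : List (Fin 3)) : Le ρ ρ := fun _ h => h
theorem Le.trans {ρ ρ' ρ'' : List (Fin 3)} (h : Le ρ ρ') (h' : Le ρ' ρ'') : Le ρ ρ'' :=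
  fun X hX => h X (h' X hX)

theorem getD_lt {A : Type} {ρ : List A} {n : ℕ} (h : n < ρ.length) (d d' : A) :
    ρ.getD n d = ρ.getD n d' := by simp [h]

theorem getD_ge {A : Type} {ρ : List A} {n : ℕ} (h : ρ.length ≤ n) (d : A) :
    ρ.getD n d = d := by simp [h]

theorem ext_ov (ρ : List (Fin 3)) (X : SX) : Ext (ov ρ X) ρ := fun _ h => getD_lt h _ _

theorem ov_of_ext {ρ : List (Fin 3)} {X : SX} (h : Ext X ρ) : ov ρ X = X := by
  funext n
  by_cases hn : n < ρ.length
  · rw [h n hn]; exact getD_lt hn _ _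
  · exact getD_ge (by omega) _

theorem ext_pre {X X' : SX} {k : ℕ} : Ext X' (pre X k) ↔ ∀ i < k, X' i = X i := by
  unfold Ext
  simp only [pre_length]
  exact forall₂_congr fun i hi => by rw [pre_getD X hi]

theorem ext_nil (X : SX) : Ext X [] := fun n hn => by simp at hn

theorem le_pre {ρ : List (Fin 3)} {X : SX} (h : Ext X ρ) {k : ℕ} (hk : ρ.length ≤ k) :
    Le ρ (pre X k) := by
  intro X' hX' n hn
  rw [ext_pre.1 hX' n (by omega), h n hn]

variable {r : ℕ}

/-- Combine an oracle and a path. -/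
def tri (O : ℕ → ℕ) (X : SX) (Y : SY r) : ℕ → Lt r := fun n => (O n, X n, Y n)

/-- Code of a letter. -/
def encL (x : Lt r) : ℕ := @Encodable.encode (Lt r) Primcodable.toEncodable x

theorem encL_primrec : Primrec (encL (r := r)) := Primrec.encode

/-- Combined oracle. -/
def jn (O : ℕ → ℕ) (X : SX) (Y : SY r) : ℕ → ℕ := fun n => encL (tri O X Y n)

/-- The oracle `O` does not compute `C`. -/
def NC (C : Set ℕ) (O : ℕ → ℕ) : Prop :=
  ¬ ∃ U : ℕ × Bool → (ℕ → ℕ) → Prop, Sig U ∧ ∀ n v, U (n, v) O ↔ (v = true ↔ n ∈ C)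

/-- `P` is a `Π⁰₁` class relative to `O`. -/
def PiC (O : ℕ → ℕ) (P : SX → SY r → Prop) : Prop :=
  ∃ U : Unit → (ℕ → Lt r) → Prop, Sig U ∧ ∀ X Y, P X Y ↔ ¬ U () (tri O X Y)

/-- `P` is left-full below `ρ`. -/
def Full (P : SX → SY r → Prop) (ρ : List (Fin 3)) : Prop := ∀ X, Ext X ρ → ∃ Y, P X Y

theorem Full.mono {P Q : SX → SY r → Prop} {ρ ρ' : List (Fin 3)} (h : Full P ρ)
    (hl : Le ρ ρ') (hPQ : ∀ X Y, P X Y → Q X Y) : Full Q ρ' := by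
  intro X hX
  obtain ⟨Y, hY⟩ := h X (hl X hX)
  exact ⟨Y, hPQ _ _ hY⟩

theorem PiC.and {O : ℕ → ℕ} {P Q : SX → SY r → Prop} (hP : PiC O P) (hQ : PiC O Q) :
    PiC O (fun X Y => P X Y ∧ Q X Y) := by
  obtain ⟨U, hU, h1⟩ := hP
  obtain ⟨V, hV, h2⟩ := hQ
  exact ⟨_, hU.or hV, fun X Y => by simp only [h1, h2]; tauto⟩

/-- openness below a string -/
theorem openX {α : Type} [Primcodable α] {V : α → (ℕ → ℕ × Fin 3) → Prop} (hV : Sig V) {a : α}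
    {O : ℕ → ℕ} {X : SX} {ρ : List (Fin 3)} (hX : Ext X ρ) (h : V a (fun i => (O i, X i))) :
    ∃ ρ', Le ρ ρ' ∧ Ext X ρ' ∧ ∀ X', Ext X' ρ' → V a (fun i => (O i, X' i)) := by
  obtain ⟨k, hk⟩ := hV.opn h
  refine ⟨pre X (max k ρ.length), le_pre hX (le_max_right _ _), ext_pre.2 fun _ _ => rfl, ?_⟩
  intro X' hX'
  apply hk
  intro i hi
  rw [ext_pre.1 hX' i (lt_of_lt_of_le hi (le_max_left _ _))]

theorem sig_allY {α : Type} [Primcodable α] {U : α → (ℕ → Lt r) → Prop} (hU : Sig U) :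
    Sig (fun a (z : ℕ → ℕ × Fin 3) => ∀ Y : SY r, U a (fun i => ((z i).1, (z i).2, Y i))) := by
  have h1 : Sig (fun a (z : ℕ → (ℕ × Fin 3) × YL r) =>
      U a (fun i => ((z i).1.1, (z i).1.2, (z i).2))) := by
    refine hU.substL (φ := id) Primrec.id (g := fun p : α × ℕ × ((ℕ × Fin 3) × YL r) =>
      (p.2.2.1.1, p.2.2.1.2, p.2.2.2)) ?_
    have h22 : Primrec (fun p : α × ℕ × ((ℕ × Fin 3) × YL r) => p.2.2) :=
      Primrec.snd.comp Primrec.snd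
    exact Primrec.pair (Primrec.fst.comp (Primrec.fst.comp h22))
      (Primrec.pair (Primrec.snd.comp (Primrec.fst.comp h22)) (Primrec.snd.comp h22))
  exact h1.all

theorem dich {O : ℕ → ℕ} {P : SX → SY r → Prop} (hP : PiC O P) (ρ : List (Fin 3)) :
    Full P ρ ∨ ∃ ρ', Le ρ ρ' ∧ ∀ X Y, Ext X ρ' → ¬ P X Y := by
  by_cases hf : Full P ρ
  · exact Or.inl hf
  right
  obtain ⟨U, hU, h1⟩ := hP
  simp only [Full, not_forall, not_exists] at hf
  obtain ⟨X, hX, hY⟩ := hf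
  have hV := sig_allY hU
  obtain ⟨ρ', h2, -, h3⟩ := openX hV (a := ()) (O := O) hX (fun Y => by
    have := hY Y
    rw [h1, not_not] at this
    exact this)
  refine ⟨ρ', h2, fun X' Y' hX' => ?_⟩
  rw [h1, not_not]
  exact h3 X' hX' Y'

theorem generic {O : ℕ → ℕ} {P : SX → SY r → Prop} {ρ : List (Fin 3)} (hP : PiC O P)
    (hF : Full P ρ) {ι : Type} [Countable ι] (req : ι → SX → SY r → Prop)
    (hstep : ∀ i P' ρ', PiC O P' → Full P' ρ' → (∀ X Y, P' X Y → P X Y) → Le ρ ρ' →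
      ∃ P'' ρ'', PiC O P'' ∧ Full P'' ρ'' ∧ (∀ X Y, P'' X Y → P' X Y) ∧ Le ρ' ρ'' ∧
        ∀ X Y, Ext X ρ'' → P'' X Y → req i X Y) :
    ∃ X Y, Ext X ρ ∧ P X Y ∧ ∀ i, req i X Y := by
  rcases isEmpty_or_nonempty ι with hι | hι
  · obtain ⟨Y, hY⟩ := hF _ (ext_ov ρ (fun _ => 0))
    exact ⟨_, Y, ext_ov ρ _, hY, fun i => isEmptyElim i⟩
  obtain ⟨e, he⟩ := exists_surjective_nat ι
  let Cond := {c : (SX → SY r → Prop) × List (Fin 3) //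
    PiC O c.1 ∧ Full c.1 c.2 ∧ (∀ X Y, c.1 X Y → P X Y) ∧ Le ρ c.2}
  have hnext : ∀ (i : ι) (c : Cond), ∃ c' : Cond, (∀ X Y, c'.1.1 X Y → c.1.1 X Y) ∧
      Le c.1.2 c'.1.2 ∧ ∀ X Y, Ext X c'.1.2 → c'.1.1 X Y → req i X Y := by
    rintro i ⟨⟨P', ρ'⟩, h1, h2, h3, h4⟩
    obtain ⟨P'', ρ'', g1, g2, g3, g4, g5⟩ := hstep i P' ρ' h1 h2 h3 h4
    exact ⟨⟨(P'', ρ''), g1, g2, fun X Y h => h3 X Y (g3 X Y h), h4.trans g4⟩, g3, g4, g5⟩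
  choose next hn1 hn2 hn3 using hnext
  let c0 : Cond := ⟨(P, ρ), hP, hF, fun _ _ h => h, Le.refl _⟩
  let c : ℕ → Cond := fun n => Nat.rec c0 (fun n c => next (e n) c) n
  have hc : ∀ n, c (n + 1) = next (e n) (c n) := fun n => rfl
  let S : ℕ → Set (ℕ → Fin 3 × YL r) := fun n =>
    {w | Ext (fun i => (w i).1) (c n).1.2 ∧ (c n).1.1 (fun i => (w i).1) (fun i => (w i).2)}
  let _ : TopologicalSpace (Fin 3 × YL r) := ⊥
  have : DiscreteTopology (Fin 3 × YL r) := ⟨rfl⟩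
  have hcl : ∀ n, IsClosed (S n) := by
    intro n
    rw [← isOpen_compl_iff]
    apply isOpen_of_local
    intro w hw
    obtain ⟨U, hU, h1⟩ := (c n).2.1
    have hw' : ¬ Ext (fun i => (w i).1) (c n).1.2 ∨
      ¬ (c n).1.1 (fun i => (w i).1) (fun i => (w i).2) := by
      simpa only [S, Set.mem_compl_iff, Set.mem_ofPred_eq, not_and_or] using hw
    rcases hw' with hw' | hw'
    · refine ⟨(c n).1.2.length, fun w' h hw2 => hw' ?_⟩
      intro i hi
      rw [← hw2.1 i hi]
      simp only [h i hi]
    · rw [h1, not_not] at hw'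
      obtain ⟨k, hk⟩ := hU.opn hw'
      refine ⟨k, fun w' h hw2 => ?_⟩
      refine (h1 _ _).1 hw2.2 (hk _ ?_)
      intro i hi
      simp only [tri, h i hi]
  obtain ⟨w, hw⟩ := IsCompact.nonempty_iInter_of_sequence_nonempty_isCompact_isClosed S
    (by
      intro n w hw
      refine ⟨hn2 (e n) (c n) _ ?_, hn1 (e n) (c n) _ _ ?_⟩
      · rw [← hc]; exact hw.1
      · rw [← hc]; exact hw.2)
    (by
      intro n
      obtain ⟨Y, hY⟩ := (c n).2.2.1 _ (ext_ov (c n).1.2 (fun _ => 0))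
      exact ⟨fun i => (ov (c n).1.2 (fun _ => 0) i, Y i), ext_ov _ _, hY⟩)
    (hcl 0).isCompact hcl
  rw [Set.mem_iInter] at hw
  refine ⟨fun i => (w i).1, fun i => (w i).2, (hw 0).1, (hw 0).2, fun i => ?_⟩
  obtain ⟨n, rfl⟩ := he i
  exact hn3 (e n) (c n) _ _ (hw (n + 1)).1 (hw (n + 1)).2

theorem stepU {C : Set ℕ} {O : ℕ → ℕ} (hO : NC C O) {P : SX → SY r → Prop} {ρ : List (Fin 3)}
    (hP : PiC O P) (hF : Full P ρ) {U : ℕ × Bool → (ℕ → Lt r) → Prop} (hU : Sig U) :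
    ∃ P' ρ', PiC O P' ∧ Full P' ρ' ∧ (∀ X Y, P' X Y → P X Y) ∧ Le ρ ρ' ∧
        ∀ X Y, Ext X ρ' → P' X Y → ¬ ∀ n v, U (n, v) (tri O X Y) ↔ (v = true ↔ n ∈ C) := by
  classical
  have hUp : ∀ a, PiC O (fun X Y => ¬ U a (tri O X Y)) := fun a =>
    ⟨fun _ => U a, (hU.subst (φ := fun _ : Unit => a) (Primrec.const a)
      (h := fun p : Unit × ℕ × List (Lt r) => p.2.2.getD p.2.1 default)
      ((Primrec.list_getD default).comp (Primrec.snd.comp Primrec.snd)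
        (Primrec.fst.comp Primrec.snd))).congr (fun _ z => by
          simp only [pre_getD z (Nat.lt_succ_self _)]), fun X Y => Iff.rfl⟩
  by_cases h1 : ∃ n, Full (fun X Y => P X Y ∧ ¬ U (n, decide (n ∈ C)) (tri O X Y)) ρ
  · obtain ⟨n, hn⟩ := h1
    refine ⟨_, ρ, hP.and (hUp _), hn, fun _ _ h => h.1, Le.refl _, ?_⟩
    rintro X Y - ⟨-, h⟩ hall
    exact h ((hall _ _).2 (by simp))
  obtain ⟨V, hV, hPV⟩ := hP
  have hV' : Sig (fun (_ : ℕ × Bool) z => V () z) := by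
    refine (hV.subst (φ := fun _ : ℕ × Bool => ()) (Primrec.const ())
      (h := fun p : (ℕ × Bool) × ℕ × List (Lt r) => p.2.2.getD p.2.1 default)
      ((Primrec.list_getD default).comp (Primrec.snd.comp Primrec.snd)
        (Primrec.fst.comp Primrec.snd))).congr (fun _ z => by
          simp only [pre_getD z (Nat.lt_succ_self _)])
  have hW := sig_allY (hV'.or hU)
  have hW1 : Sig (fun (a : ℕ × Bool) (z : ℕ → ℕ × Fin 3) => ∀ Y : SY r,
      V () (fun i => ((z i).1, ρ.getD i (z i).2, Y i)) ∨
      U a (fun i => ((z i).1, ρ.getD i (z i).2, Y i))) := by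
    refine hW.substL (φ := id) Primrec.id (g := fun p : (ℕ × Bool) × ℕ × (ℕ × Fin 3) =>
      (p.2.2.1, ρ.getD p.2.1 p.2.2.2)) ?_
    have h22 : Primrec (fun p : (ℕ × Bool) × ℕ × (ℕ × Fin 3) => p.2.2) :=
      Primrec.snd.comp Primrec.snd
    refine Primrec.pair (Primrec.fst.comp h22) ?_
    have : Primrec (fun p : (ℕ × Bool) × ℕ × (ℕ × Fin 3) => (ρ[p.2.1]?).getD p.2.2.2) :=
      Primrec.option_getD.comp (Primrec.list_getElem?.comp (Primrec.const ρ)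
        (Primrec.fst.comp Primrec.snd)) (Primrec.snd.comp h22)
    exact this.of_eq fun p => by simp [List.getD_eq_getElem?_getD]
  have hW2 := hW1.ex
  have hnf : ∀ a, (∃ X : SX, ∀ Y : SY r, V () (tri O (ov ρ X) Y) ∨ U a (tri O (ov ρ X) Y)) ↔
      ¬ Full (fun X Y => P X Y ∧ ¬ U a (tri O X Y)) ρ := by
    intro a
    simp only [Full, not_forall, not_exists, hPV]
    constructor
    · rintro ⟨X, h⟩
      exact ⟨ov ρ X, ext_ov _ _, fun Y => by have := h Y; tauto⟩
    · rintro ⟨X, hX, h⟩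
      exact ⟨X, fun Y => by rw [ov_of_ext hX]; have := h Y; tauto⟩
  by_cases h2 : ∃ n, ¬ Full (fun X Y => P X Y ∧ ¬ U (n, !decide (n ∈ C)) (tri O X Y)) ρ
  · obtain ⟨n, hn⟩ := h2
    rw [← hnf] at hn
    obtain ⟨X, hX⟩ := hn
    obtain ⟨ρ', g1, g2, g3⟩ := openX hW (a := (n, !decide (n ∈ C))) (O := O) (X := ov ρ X)
      (ext_ov ρ X) (fun Y => hX Y)
    refine ⟨P, ρ', ⟨V, hV, hPV⟩, hF.mono g1 (fun _ _ h => h), fun _ _ h => h, g1, ?_⟩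
    intro X' Y' hX' hPX hall
    have h4 := g3 X' hX' Y'
    have h5 := (hPV X' Y').1 hPX
    have h6 := (hall n (!decide (n ∈ C))).1 (h4.resolve_left h5)
    by_cases hn : n ∈ C <;> simp [hn] at h6
  · exfalso
    push Not at h1 h2
    apply hO
    refine ⟨_, hW2, ?_⟩
    intro n v
    have := hnf (n, v)
    refine this.trans ?_
    have h1n := h1 n
    have h2n := h2 n
    by_cases hn : n ∈ C <;> cases v <;> simp_all

theorem lemmaA {C : Set ℕ} {O : ℕ → ℕ} (hO : NC C O) {P : SX → SY r → Prop} {ρ : List (Fin 3)}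
    (hP : PiC O P) (hF : Full P ρ) {ι : Type} [Countable ι] {Q : ι → SX → SY r → Prop}
    (hQ : ∀ i, PiC O (Q i)) :
    ∃ X Y, Ext X ρ ∧ P X Y ∧ NC C (jn O X Y) ∧
      ∀ i, ¬ Q i X Y ∨ ∃ ρ', Le ρ ρ' ∧ Full (fun X Y => P X Y ∧ Q i X Y) ρ' := by
  have := countable_primrecPred (α := (ℕ × Bool) × List (Lt r))
  obtain ⟨X, Y, h1, h2, h3⟩ := generic hP hF
    (ι := {R : (ℕ × Bool) × List (Lt r) → Prop // PrimrecPred R} ⊕ ι)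
    (req := fun i X Y => match i with
      | Sum.inl R => ¬ ∀ n v, (∃ k, R.1 ((n, v), pre (tri O X Y) k)) ↔ (v = true ↔ n ∈ C)
      | Sum.inr i => ¬ Q i X Y ∨ ∃ ρ', Le ρ ρ' ∧ Full (fun X Y => P X Y ∧ Q i X Y) ρ')
    (by
      rintro (R | i) P' ρ' hP' hF' hPP hρ
      · exact stepU hO hP' hF' (Sig.mk' R.2)
      · rcases dich (hP'.and (hQ i)) ρ' with h | ⟨ρ'', h1, h2⟩
        · exact ⟨P', ρ', hP', hF', fun _ _ h => h, Le.refl _, fun _ _ _ _ =>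
            Or.inr ⟨ρ', hρ, h.mono (Le.refl _) fun X Y h => ⟨hPP _ _ h.1, h.2⟩⟩⟩
        · exact ⟨P', ρ'', hP', hF'.mono h1 fun _ _ h => h, fun _ _ h => h, h1, fun X Y hX hXY =>
            Or.inl fun hQ => h2 X Y hX ⟨hXY, hQ⟩⟩)
  refine ⟨X, Y, h1, h2, ?_, fun i => h3 (Sum.inr i)⟩
  rintro ⟨U, hU, hUC⟩
  have hU' : Sig (fun a (z : ℕ → Lt r) => U a (fun i => encL (z i))) :=
    hU.substL (φ := id) Primrec.id (g := fun p : (ℕ × Bool) × ℕ × Lt r => encL p.2.2)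
      (encL_primrec.comp (Primrec.snd.comp Primrec.snd))
  obtain ⟨R, hR, -, hR2⟩ := hU'
  refine h3 (Sum.inl ⟨R, hR⟩) ?_
  intro n v
  rw [← hR2]
  exact hUC n v

end Paper
namespace Paper

/-- choose one of the two letters different from `x` -/
def gx (x w : Fin 3) : Fin 3 := if w = 0 then x + 1 else x + 2

theorem gx_ne (x w : Fin 3) : gx x w ≠ x := by revert x w; decide
theorem gx_surj (x y : Fin 3) (h : x ≠ y) : ∃ w, gx x w = y := by revert x y; decide
theorem gx_avoid (x y : Fin 3) : ∃ w, gx x w ≠ y := by revert x y; decide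

/-- A sequence extending `τ` and different from `X` after it. -/
def hx (τ : List (Fin 3)) (X W : SX) : SX := fun n => τ.getD n (gx (X n) (W n))

theorem ext_hx (τ : List (Fin 3)) (X W : SX) : Ext (hx τ X W) τ := fun _ h => getD_lt h _ _

theorem hx_ge {τ : List (Fin 3)} {n : ℕ} (h : τ.length ≤ n) (X W : SX) :
    hx τ X W n = gx (X n) (W n) := getD_ge h _

theorem hx_lt {τ : List (Fin 3)} {n : ℕ} (h : n < τ.length) (X W : SX) :
    hx τ X W n = τ.getD n 0 := getD_lt h _ _

theorem getD_primrec {α A : Type} [Primcodable α] [Primcodable A] (τ : List A) {f : α → ℕ}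
    {g : α → A} (hf : Primrec f) (hg : Primrec g) : Primrec (fun a => τ.getD (f a) (g a)) := by
  have : Primrec (fun a => (τ[f a]?).getD (g a)) :=
    Primrec.option_getD.comp (Primrec.list_getElem?.comp (Primrec.const τ) hf) hg
  exact this.of_eq fun p => by simp [List.getD_eq_getElem?_getD]

theorem gx_primrec : Primrec₂ gx := Primrec.dom_finite (fun p : Fin 3 × Fin 3 => gx p.1 p.2)

theorem Sig.exLetter {L : Type} [Primcodable L] [Inhabited L] {D : ℕ × L → Prop}
    (hD : PrimrecPred D) : Sig (fun (_ : Unit) (z : ℕ → L) => ∃ k, D (k, z k)) := by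
  refine (Sig.mk' (R := fun p : Unit × List L => 0 < p.2.length ∧
    D (p.2.length - 1, p.2.getD (p.2.length - 1) default)) ?_).congr ?_
  · have hl : Primrec (fun p : Unit × List L => p.2.length) := Primrec.list_length.comp Primrec.snd
    have hl1 : Primrec (fun p : Unit × List L => p.2.length - 1) :=
      Primrec.nat_sub.comp hl (Primrec.const 1)
    exact (Primrec.nat_lt.comp (Primrec.const 0) hl).and
      (hD.comp (Primrec.pair hl1 ((Primrec.list_getD default).comp Primrec.snd hl1)))
  · intro _ z
    constructor
    · rintro ⟨k, h1, h2⟩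
      simp only [pre_length] at h1 h2
      rw [pre_getD z (by omega)] at h2
      exact ⟨_, h2⟩
    · rintro ⟨k, h⟩
      refine ⟨k + 1, by simp, ?_⟩
      simp only [pre_length, Nat.add_sub_cancel]
      rwa [pre_getD z (by omega)]

variable {r : ℕ}

/-- Disagreement class. -/
def QP (P : SX → SY r → Prop) (s : Fin r) (τ : List (Fin 3)) (m : ℕ) (X : SX) (Y : SY r) : Prop :=
  ∀ W : SX, ∃ Y1 : SY r, P (hx τ X W) Y1 ∧ ∀ k ≥ m, Y1 k s ≠ Y k s

theorem ev_primrec (s : Fin r) : Primrec (fun y : YL r => y s) := Primrec.dom_finite _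

theorem QP_pi {O : ℕ → ℕ} {P : SX → SY r → Prop} (hP : PiC O P) (s : Fin r) (τ : List (Fin 3))
    (m : ℕ) : PiC O (QP P s τ m) := by
  obtain ⟨V, hV, hPV⟩ := hP
  have e : Primrec (fun p : Unit × ℕ × ((Lt r × Fin 3) × YL r) => p.2.2) :=
    Primrec.snd.comp Primrec.snd
  have e1 : Primrec (fun p : Unit × ℕ × ((Lt r × Fin 3) × YL r) => p.2.2.1.1) :=
    Primrec.fst.comp (Primrec.fst.comp e)
  have h1 : Sig (fun (_ : Unit) (z : ℕ → (Lt r × Fin 3) × YL r) =>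
      V () (fun i => ((z i).1.1.1, τ.getD i (gx (z i).1.1.2.1 (z i).1.2), (z i).2))) := by
    refine hV.substL (φ := fun _ => ()) (Primrec.const _)
      (g := fun p : Unit × ℕ × ((Lt r × Fin 3) × YL r) =>
        (p.2.2.1.1.1, τ.getD p.2.1 (gx p.2.2.1.1.2.1 p.2.2.1.2), p.2.2.2)) ?_
    refine Primrec.pair (Primrec.fst.comp e1) (Primrec.pair (getD_primrec _
      (Primrec.fst.comp Primrec.snd) ?_) (Primrec.snd.comp e))
    exact gx_primrec.comp (Primrec.fst.comp (Primrec.snd.comp e1))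
      (Primrec.snd.comp (Primrec.fst.comp e))
  have h2 : Sig (fun (_ : Unit) (z : ℕ → (Lt r × Fin 3) × YL r) =>
      ∃ k, (m ≤ k ∧ (z k).2 s = (z k).1.1.2.2 s)) := by
    refine Sig.exLetter (D := fun p : ℕ × ((Lt r × Fin 3) × YL r) =>
      m ≤ p.1 ∧ p.2.2 s = p.2.1.1.2.2 s) ?_
    refine (Primrec.nat_le.comp (Primrec.const m) Primrec.fst).and (Primrec.eq.comp
      ((ev_primrec s).comp (Primrec.snd.comp Primrec.snd)) ((ev_primrec s).comp ?_))
    exact Primrec.snd.comp (Primrec.snd.comp (Primrec.fst.comp (Primrec.fst.comp Primrec.snd)))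
  refine ⟨_, (h1.or h2).all.ex, ?_⟩
  intro X Y
  simp only [QP, hPV, tri]
  push Not
  rfl

/-- Decoding a letter. -/
def decL (n : ℕ) : Lt r := (@Encodable.decode (Lt r) Primcodable.toEncodable n).getD default

theorem decL_primrec : Primrec (decL (r := r)) :=
  Primrec.option_getD.comp Primrec.decode (Primrec.const _)

theorem decL_encL (x : Lt r) : decL (encL x) = x := by
  simp only [decL, encL]
  rw [@Encodable.encodek (Lt r) Primcodable.toEncodable]; rfl

theorem PiC.jn {O : ℕ → ℕ} {X0 : SX} {Y0 : SY r} {V : Unit → (ℕ → Lt r × Fin 3 × YL r) → Prop}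
    (hV : Sig V) : PiC (jn O X0 Y0) (fun X Y => ¬ V () (fun i => (tri O X0 Y0 i, X i, Y i))) := by
  refine ⟨fun _ z => V () (fun i => (decL (z i).1, (z i).2)), ?_, ?_⟩
  · refine hV.substL (φ := fun _ => ()) (Primrec.const _)
      (g := fun p : Unit × ℕ × Lt r => (decL p.2.2.1, p.2.2.2)) ?_
    have e : Primrec (fun p : Unit × ℕ × Lt r => p.2.2) := Primrec.snd.comp Primrec.snd
    exact Primrec.pair (decL_primrec.comp (Primrec.fst.comp e)) (Primrec.snd.comp e)
  · intro X Y
    simp only [Paper.jn, tri, decL_encL]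

theorem PiC.lift {O : ℕ → ℕ} {X0 : SX} {Y0 : SY r} {P : SX → SY r → Prop} (hP : PiC O P) :
    PiC (Paper.jn O X0 Y0) P := by
  obtain ⟨V, hV, hPV⟩ := hP
  have h1 : Sig (fun (_ : Unit) (z : ℕ → Lt r × Fin 3 × YL r) =>
      V () (fun i => ((z i).1.1, (z i).2))) := by
    refine hV.substL (φ := fun _ => ()) (Primrec.const _)
      (g := fun p : Unit × ℕ × (Lt r × Fin 3 × YL r) => (p.2.2.1.1, p.2.2.2)) ?_
    have e : Primrec (fun p : Unit × ℕ × (Lt r × Fin 3 × YL r) => p.2.2) :=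
      Primrec.snd.comp Primrec.snd
    exact Primrec.pair (Primrec.fst.comp (Primrec.fst.comp e)) (Primrec.snd.comp e)
  obtain ⟨U, hU, h⟩ := PiC.jn (O := O) (X0 := X0) (Y0 := Y0) h1
  exact ⟨U, hU, fun X Y => (hPV X Y).trans (h X Y)⟩

theorem PiC.hx {O : ℕ → ℕ} {X0 : SX} {Y0 : SY r} {P : SX → SY r → Prop} (hP : PiC O P)
    (ρ : List (Fin 3)) : PiC (Paper.jn O X0 Y0) (fun W Y => P (hx ρ X0 W) Y) := by
  obtain ⟨V, hV, hPV⟩ := hP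
  have h1 : Sig (fun (_ : Unit) (z : ℕ → Lt r × Fin 3 × YL r) =>
      V () (fun i => ((z i).1.1, ρ.getD i (gx (z i).1.2.1 (z i).2.1), (z i).2.2))) := by
    refine hV.substL (φ := fun _ => ()) (Primrec.const _)
      (g := fun p : Unit × ℕ × (Lt r × Fin 3 × YL r) =>
        (p.2.2.1.1, ρ.getD p.2.1 (gx p.2.2.1.2.1 p.2.2.2.1), p.2.2.2.2)) ?_
    have e : Primrec (fun p : Unit × ℕ × (Lt r × Fin 3 × YL r) => p.2.2) :=
      Primrec.snd.comp Primrec.snd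
    refine Primrec.pair (Primrec.fst.comp (Primrec.fst.comp e)) (Primrec.pair (getD_primrec _
      (Primrec.fst.comp Primrec.snd) ?_) (Primrec.snd.comp (Primrec.snd.comp e)))
    exact gx_primrec.comp (Primrec.fst.comp (Primrec.snd.comp (Primrec.fst.comp e)))
      (Primrec.fst.comp (Primrec.snd.comp e))
  obtain ⟨U, hU, h⟩ := PiC.jn (O := O) (X0 := X0) (Y0 := Y0) h1
  exact ⟨U, hU, fun X Y => (hPV _ Y).trans (h X Y)⟩

theorem PiC.letter {O : ℕ → ℕ} {X0 : SX} {Y0 : SY r} {s : Fin r} {m : ℕ}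
    (D : Fin 2 → Fin 2 → Prop) :
    PiC (Paper.jn O X0 Y0) (fun _ Y => ∀ k ≥ m, D (Y k s) (Y0 k s)) := by
  classical
  have hD : PrimrecPred (fun p : Fin 2 × Fin 2 => ¬ D p.1 p.2) :=
    ⟨inferInstance, Primrec.dom_finite _⟩
  have h2 : Sig (fun (_ : Unit) (z : ℕ → Lt r × Fin 3 × YL r) =>
      ∃ k, (m ≤ k ∧ ¬ D ((z k).2.2 s) ((z k).1.2.2 s))) := by
    refine Sig.exLetter (D := fun p : ℕ × (Lt r × Fin 3 × YL r) =>
      m ≤ p.1 ∧ ¬ D (p.2.2.2 s) (p.2.1.2.2 s)) ?_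
    refine (Primrec.nat_le.comp (Primrec.const m) Primrec.fst).and (hD.comp (Primrec.pair
      ((ev_primrec s).comp (Primrec.snd.comp (Primrec.snd.comp Primrec.snd)))
      ((ev_primrec s).comp ?_)))
    exact Primrec.snd.comp (Primrec.snd.comp (Primrec.fst.comp Primrec.snd))
  obtain ⟨U, hU, h⟩ := PiC.jn (O := O) (X0 := X0) (Y0 := Y0) h2
  refine ⟨U, hU, fun X Y => Iff.trans ?_ (h X Y)⟩
  simp only [tri]
  push Not
  rfl

theorem fin2_eq {a b c : Fin 2} (h1 : a ≠ b) (h2 : b ≠ c) : a = c := by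
  revert a b c; decide

theorem blow {C : Set ℕ} {O : ℕ → ℕ} (hO : NC C O) {P Ph : SX → SY r → Prop}
    {ρ ρ2 τ τ2 : List (Fin 3)} {s : Fin r} {m m2 : ℕ} (hP : PiC O P) (hPh : PiC O Ph)
    (hQ : ∀ X Y, Ext X ρ → P X Y → QP Ph s τ m X Y) (hτ2 : Le ρ τ2)
    (hF : Full (fun X Y => P X Y ∧ QP P s τ2 m2 X Y) ρ2) :
    ∃ (O' : ℕ → ℕ) (P' : SX → SY r → Prop) (τ' : List (Fin 3)) (z : ℕ → Fin 2) (m' : ℕ),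
      NC C O' ∧ PiC O' P' ∧ Full P' τ' ∧ Le τ τ' ∧ (∀ X Y, P' X Y → Ph X Y) ∧
      ∀ X Y, P' X Y → ∀ k ≥ m', Y k s = z k := by
  obtain ⟨X, Y, -, ⟨-, hXQ⟩, hNC, -⟩ := lemmaA hO (hP.and (QP_pi hP s τ2 m2)) hF (ι := Empty)
    (Q := fun i => i.elim) (fun i => i.elim)
  refine ⟨jn O X Y, fun X' Y' => Ph X' Y' ∧ ∀ k ≥ max m m2, Y' k s = Y k s,
    pre (fun n => τ.getD n (τ2.getD n 0 + 1)) (max τ.length τ2.length), fun k => Y k s, max m m2,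
    hNC, (PiC.lift hPh).and (PiC.letter (fun a b => a = b)), ?_, ?_, fun _ _ h => h.1,
    fun _ _ h => h.2⟩
  · intro Xi hXi
    have hXi' := ext_pre.1 hXi
    choose W2 hW2 using fun n => gx_avoid (X n) (Xi n)
    obtain ⟨Yj, hPj, hYj⟩ := hXQ W2
    have hq := hQ _ _ (hτ2 _ (ext_hx τ2 X W2)) hPj
    have hne : ∀ n, τ.length ≤ n → hx τ2 X W2 n ≠ Xi n := by
      intro n hn
      by_cases h2 : n < τ2.length
      · rw [hXi' n (lt_of_lt_of_le h2 (le_max_right _ _)), getD_ge hn, hx_lt h2]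
        generalize τ2.getD n 0 = a
        revert a; decide
      · rw [hx_ge (by omega)]; exact hW2 n
    have : ∀ n, ∃ w, τ.length ≤ n → gx (hx τ2 X W2 n) w = Xi n := by
      intro n
      by_cases hn : τ.length ≤ n
      · obtain ⟨w, hw⟩ := gx_surj _ _ (hne n hn)
        exact ⟨w, fun _ => hw⟩
      · exact ⟨0, fun h => absurd h hn⟩
    choose W hW using this
    have hXeq : hx τ (hx τ2 X W2) W = Xi := by
      funext n
      by_cases hn : τ.length ≤ n
      · rw [hx_ge hn]; exact hW n hn
      · rw [hx_lt (by omega), hXi' n (lt_of_lt_of_le (by omega) (le_max_left _ _))]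
        exact getD_lt (by omega) _ _
    obtain ⟨Yi, hPi, hYi⟩ := hq W
    rw [hXeq] at hPi
    exact ⟨Yi, hPi, fun k hk => fin2_eq (hYi k (le_trans (le_max_left _ _) hk))
      (hYj k (le_trans (le_max_right _ _) hk))⟩
  · intro X' hX' n hn
    rw [ext_pre.1 hX' n (lt_of_lt_of_le hn (le_max_left _ _))]
    exact getD_lt hn _ _

theorem max_card {p : Finset (Fin r) → Prop} {D0 : Finset (Fin r)} (h : p D0) :
    ∃ D, p D ∧ ∀ D', p D' → D'.card ≤ D.card := by
  classical
  obtain ⟨D, hD, hm⟩ := Finset.exists_max_image (Finset.univ.filter p) Finset.card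
    ⟨D0, by simp [h]⟩
  exact ⟨D, by simpa using hD, fun D' h' => hm D' (by simp [h'])⟩

theorem mem_of_max {p : Finset (Fin r) → Prop} {D : Finset (Fin r)} {s : Fin r}
    (hm : ∀ D', p D' → D'.card ≤ D.card) (h : p (insert s D)) : s ∈ D := by
  by_contra hs
  have := hm _ h
  rw [Finset.card_insert_of_notMem hs] at this
  omega

/-- State of the construction. -/
def St (C : Set ℕ) (T : SX → SY r → Prop) (O : ℕ → ℕ) (P : SX → SY r → Prop) (ρ : List (Fin 3))
    (D : Finset (Fin r)) : Prop :=
  NC C O ∧ PiC O P ∧ Full P ρ ∧ (∀ X Y, P X Y → T X Y) ∧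
    ∀ s ∈ D, ∃ (b : ℕ → Fin 2) (m : ℕ), ∀ X Y, Ext X ρ → P X Y → ∀ k ≥ m, Y k s = b k

theorem exists_good {C : Set ℕ} {T : SX → SY r → Prop} {O0 : ℕ → ℕ} (hO0 : NC C O0)
    (hT : PiC O0 T) (hF : Full T []) :
    ∃ O P ρ D, St C T O P ρ D ∧ ∀ s ∉ D, ∀ τ2 m2 ρ2, Le ρ τ2 → Le ρ ρ2 →
      ¬ Full (fun X Y => P X Y ∧ QP P s τ2 m2 X Y) ρ2 := by
  obtain ⟨D, ⟨O, Ps, ρs, hO, hPs, hFs, hTs, hD⟩, hDmax⟩ := max_card (r := r)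
    (p := fun D => ∃ O P ρ, St C T O P ρ D) (D0 := ∅)
    ⟨O0, T, [], hO0, hT, hF, fun _ _ h => h, by simp⟩
  obtain ⟨E, ⟨P, ρ, hP, hFP, hPP, hρ, hE⟩, hEmax⟩ := max_card (r := r)
    (p := fun E => ∃ P ρ, PiC O P ∧ Full P ρ ∧ (∀ X Y, P X Y → Ps X Y) ∧ Le ρs ρ ∧
      ∀ s ∈ E, ∃ Ph τ m, PiC O Ph ∧ (∀ X Y, Ph X Y → Ps X Y) ∧ Le ρs τ ∧
        ∀ X Y, Ext X ρ → P X Y → QP Ph s τ m X Y) (D0 := ∅)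
    ⟨Ps, ρs, hPs, hFs, fun _ _ h => h, Le.refl _, by simp⟩
  refine ⟨O, P, ρ, D, ⟨hO, hP, hFP, fun X Y h => hTs X Y (hPP X Y h), ?_⟩, ?_⟩
  · intro s hs
    obtain ⟨b, m, h⟩ := hD s hs
    exact ⟨b, m, fun X Y hX hXY => h X Y (hρ X hX) (hPP X Y hXY)⟩
  · intro s hs τ2 m2 ρ2 hτ2 hρ2 hfull
    have hsE : s ∈ E := by
      refine mem_of_max hEmax ⟨fun X Y => P X Y ∧ QP P s τ2 m2 X Y, ρ2,
        hP.and (QP_pi hP _ _ _), hfull, fun X Y h => hPP X Y h.1, hρ.trans hρ2, ?_⟩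
      intro s' hs'
      rcases Finset.mem_insert.1 hs' with rfl | hs'
      · exact ⟨P, τ2, m2, hP, hPP, hρ.trans hτ2, fun X Y _ h => h.2⟩
      · obtain ⟨Ph, τ, m, h1, h2, h3, h4⟩ := hE s' hs'
        exact ⟨Ph, τ, m, h1, h2, h3, fun X Y hX h => h4 X Y (hρ2 X hX) h.1⟩
    obtain ⟨Ph, τ, m, h1, h2, h3, h4⟩ := hE s hsE
    obtain ⟨O', P', τ', z, m', g1, g2, g3, g4, g5, g6⟩ := blow hO hP h1 h4 hτ2 hfull
    apply hs
    refine mem_of_max hDmax ⟨O', P', τ', g1, g2, g3, fun X Y h => hTs _ _ (h2 _ _ (g5 _ _ h)), ?_⟩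
    intro s' hs'
    rcases Finset.mem_insert.1 hs' with rfl | hs'
    · exact ⟨z, m', fun X Y _ h => g6 X Y h⟩
    · obtain ⟨b, m, h⟩ := hD s' hs'
      exact ⟨b, m, fun X Y hX hXY => h X Y (h3 X (g4 X hX)) (h2 _ _ (g5 _ _ hXY))⟩

theorem comb {C : Set ℕ} {T : SX → SY r → Prop} {O0 : ℕ → ℕ} (hO0 : NC C O0)
    (hT : PiC O0 T) (hF : Full T []) :
    ∃ (O : ℕ → ℕ) (X0 : SX) (Y0 : SY r) (W : SX) (Y1 : SY r) (ρ : List (Fin 3)),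
      T X0 Y0 ∧ T (hx ρ X0 W) Y1 ∧ NC C (jn (jn O X0 Y0) W Y1) ∧
      ∀ s m, ∃ k ≥ m, Y1 k s = Y0 k s := by
  obtain ⟨O, P, ρ, D, ⟨hO, hP, hFP, hPT, hD⟩, hgood⟩ := exists_good hO0 hT hF
  obtain ⟨X0, Y0, hX0, hP0, hNC1, hQ0⟩ := lemmaA hO hP hFP
    (ι := Fin r × List (Fin 3) × ℕ) (Q := fun i => QP P i.1 i.2.1 i.2.2)
    (fun i => QP_pi hP _ _ _)
  have hQ0' : ∀ s ∉ D, ∀ τ m, Le ρ τ → ¬ QP P s τ m X0 Y0 := by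
    intro s hs τ m hτ
    rcases hQ0 (s, τ, m) with h | ⟨ρ', h1, h2⟩
    · exact h
    · exact absurd h2 (hgood s hs τ m ρ' hτ h1)
  have hF1 : Full (fun W Y => P (hx ρ X0 W) Y) [] := fun W _ => hFP _ (ext_hx ρ X0 W)
  obtain ⟨W, Y1, -, hP1, hNC2, hQ1⟩ := lemmaA hNC1 (PiC.hx hP ρ) hF1
    (ι := Fin r × ℕ) (Q := fun i _ Y => ∀ k ≥ i.2, Y k i.1 ≠ Y0 k i.1)
    (fun i => PiC.letter (fun a b => a ≠ b))
  refine ⟨O, X0, Y0, W, Y1, ρ, hPT _ _ hP0, hPT _ _ hP1, hNC2, ?_⟩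
  intro s m
  by_cases hs : s ∈ D
  · obtain ⟨b, m', h⟩ := hD s hs
    refine ⟨max m m', le_max_left _ _, ?_⟩
    rw [h _ _ hX0 hP0 _ (le_max_right _ _), h _ _ (ext_hx ρ X0 W) hP1 _ (le_max_right _ _)]
  · rcases hQ1 (s, m) with h | ⟨ω, -, h⟩
    · push Not at h
      exact h
    · exfalso
      let V : SX := ov ω (fun _ => 0)
      let N := max ρ.length ω.length
      refine hQ0' s hs (pre (hx ρ X0 V) N) m (le_pre (ext_hx ρ X0 V) (le_max_left _ _)) ?_
      intro W'
      have hext : Ext (fun n => if n < N then V n else W' n) ω := by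
        intro n hn
        have : n < N := lt_of_lt_of_le hn (le_max_right _ _)
        simp only [this, if_true]
        exact ext_ov ω _ n hn
      obtain ⟨Y, h1, h2⟩ := h _ hext
      refine ⟨Y, ?_, h2⟩
      convert h1 using 1
      funext n
      by_cases hn : n < N
      · rw [hx_lt (by simpa using hn), pre_getD _ hn]
        simp [hx, hn]
      · rw [hx_ge (by simpa using hn), hx_ge (le_trans (le_max_left _ _) (not_lt.1 hn))]
        simp [hn]

end Paper
namespace Paper

/-- Evaluation with a partial oracle. -/
def peval (O : ℕ →. ℕ) : OCode → ℕ →. ℕ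
  | .zero => pure 0
  | .succ => Nat.succ
  | .left => ↑fun n : ℕ => n.unpair.1
  | .right => ↑fun n : ℕ => n.unpair.2
  | .oracle => O
  | .pair cf cg => fun n => Nat.pair <$> peval O cf n <*> peval O cg n
  | .comp cf cg => fun n => peval O cg n >>= peval O cf
  | .prec cf cg =>
    Nat.unpaired fun a n =>
      n.rec (peval O cf a) fun y IH => do
        let i ← IH
        peval O cg (Nat.pair a (Nat.pair y i))
  | .rfind' cf =>
    Nat.unpaired fun a m =>
      (Nat.rfind fun n => (fun m => m = 0) <$> peval O cf (Nat.pair a (n + m))).map (· + m)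

theorem oeval_eq (O : ℕ → ℕ) (c : OCode) : oeval O c = peval (fun n => Part.some (O n)) c := by
  induction c with
  | zero | succ | left | right | oracle => rfl
  | pair a b iha ihb => simp only [oeval, peval, iha, ihb]; rfl
  | comp a b iha ihb => simp only [oeval, peval, iha, ihb]; rfl
  | prec a b iha ihb => simp only [oeval, peval, iha, ihb]; rfl
  | rfind' a iha => simp only [oeval, peval, iha]; rfl

theorem peval_ev {ι : Type} {l : Filter ι} {Of : ι → ℕ →. ℕ} {O : ℕ →. ℕ}
    (h : ∀ n v, v ∈ O n → ∀ᶠ k in l, v ∈ Of k n) (c : OCode) :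
    ∀ n v, v ∈ peval O c n → ∀ᶠ k in l, v ∈ peval (Of k) c n := by
  induction c with
  | zero => intro n v hv; exact Filter.Eventually.of_forall fun _ => hv
  | succ => intro n v hv; exact Filter.Eventually.of_forall fun _ => hv
  | left => intro n v hv; exact Filter.Eventually.of_forall fun _ => hv
  | right => intro n v hv; exact Filter.Eventually.of_forall fun _ => hv
  | oracle => exact h
  | pair a b iha ihb =>
    intro n v hv
    simp only [peval, Seq.seq, Part.map_eq_map, Part.bind_map, Part.mem_bind_iff,
      Part.mem_map_iff] at hv ⊢
    obtain ⟨x, hx, y, hy, rfl⟩ := hv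
    filter_upwards [iha _ _ hx, ihb _ _ hy] with k h1 h2
    exact ⟨x, h1, y, h2, rfl⟩
  | comp a b iha ihb =>
    intro n v hv
    obtain ⟨x, hx, hy⟩ := Part.mem_bind_iff.1 hv
    filter_upwards [ihb _ _ hx, iha _ _ hy] with k h1 h2
    exact Part.mem_bind_iff.2 ⟨x, h1, h2⟩
  | prec a b iha ihb =>
    intro n v hv
    simp only [peval, Nat.unpaired] at hv ⊢
    generalize n.unpair.2 = y at hv ⊢
    induction y generalizing v with
    | zero => exact iha _ _ hv
    | succ y ih =>
      simp only [Part.bind_eq_bind, Part.mem_bind_iff] at hv ih ⊢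
      obtain ⟨x, hx, hy⟩ := hv
      filter_upwards [ih _ hx, ihb _ _ hy] with k h1 h2
      exact ⟨x, h1, h2⟩
  | rfind' a iha =>
    intro n v hv
    obtain ⟨x, hx, rfl⟩ := (Part.mem_map_iff _).1 hv
    obtain ⟨hx1, h2⟩ := Nat.mem_rfind.1 hx
    obtain ⟨y, hy, hy2⟩ := (Part.mem_map_iff _).1 hx1
    have h3 : ∀ m ∈ Finset.range x, ∀ᶠ k in l,
        ∃ a_1 ∈ peval (Of k) a (Nat.pair (Nat.unpair n).1 (m + (Nat.unpair n).2)),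
          decide (a_1 = 0) = false := by
      intro m hm
      obtain ⟨z, hz, hz2⟩ := (Part.mem_map_iff _).1 (h2 (Finset.mem_range.1 hm))
      filter_upwards [iha _ _ hz] with k h1
      exact ⟨z, h1, hz2⟩
    filter_upwards [iha _ _ hy, (Filter.eventually_all_finset _).2 h3] with k h1 h4
    exact (Part.mem_map_iff _).2 ⟨x, Nat.mem_rfind.2 ⟨(Part.mem_map_iff _).2 ⟨y, h1, hy2⟩,
      fun {m} hm => (Part.mem_map_iff _).2 (h4 m (Finset.mem_range.2 hm))⟩, rfl⟩

theorem peval_mono {O O' : ℕ →. ℕ} (h : ∀ n v, v ∈ O n → v ∈ O' n) (c : OCode) (n v : ℕ)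
    (hv : v ∈ peval O c n) : v ∈ peval O' c n := by
  have := peval_ev (l := (⊤ : Filter Unit)) (Of := fun _ => O') (O := O)
    (fun n v hv => Filter.Eventually.of_forall fun _ => h n v hv) c n v hv
  obtain ⟨_, h⟩ := this.exists
  exact h

theorem peval_partrec {α : Type} [Primcodable α] {O : α → ℕ →. ℕ} (hO : Partrec₂ O) (c : OCode) :
    Partrec₂ (fun a n => peval (O a) c n) := by
  induction c with
  | zero => exact (Computable.const 0).partrec
  | succ => exact (Computable.succ.comp Computable.snd).partrec
  | left => exact (Computable.fst.comp (Computable.unpair.comp Computable.snd)).partrec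
  | right => exact (Computable.snd.comp (Computable.unpair.comp Computable.snd)).partrec
  | oracle => exact hO
  | pair f g ihf ihg =>
    have hg : Partrec₂ (fun (p : α × ℕ) (x : ℕ) =>
        (peval (O p.1) g p.2).map (fun y => Nat.pair x y)) :=
      Partrec.map (ihg.comp (Computable.fst.comp Computable.fst)
        (Computable.snd.comp Computable.fst))
        (Primrec₂.natPair.to_comp.comp (Computable.snd.comp Computable.fst) Computable.snd)
    refine (Partrec.bind ihf hg).of_eq ?_
    intro p
    simp only [peval, Seq.seq, Part.map_eq_map, Part.bind_map]
  | comp f g ihf ihg =>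
    exact Partrec.bind ihg (ihf.comp (Computable.fst.comp Computable.fst) Computable.snd)
  | prec f g ihf ihg =>
    refine (Partrec.nat_rec (f := fun p : α × ℕ => p.2.unpair.2)
      (g := fun p => peval (O p.1) f p.2.unpair.1)
      (h := fun p q => peval (O p.1) g (Nat.pair p.2.unpair.1 (Nat.pair q.1 q.2)))
      (Computable.snd.comp (Computable.unpair.comp Computable.snd))
      (ihf.comp Computable.fst (Computable.fst.comp (Computable.unpair.comp Computable.snd)))
      ?_).of_eq ?_
    · refine ihg.comp (Computable.fst.comp Computable.fst) (Primrec₂.natPair.to_comp.comp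
        (Computable.fst.comp (Computable.unpair.comp (Computable.snd.comp Computable.fst)))
        (Primrec₂.natPair.to_comp.comp (Computable.fst.comp Computable.snd)
          (Computable.snd.comp Computable.snd)))
    · intro p
      simp only [peval, Nat.unpaired, Part.bind_eq_bind]
  | rfind' f ihf =>
    have h1 : Partrec₂ (fun (p : α × ℕ) (n : ℕ) => (peval (O p.1) f
        (Nat.pair p.2.unpair.1 (n + p.2.unpair.2))).map (fun m => decide (m = 0))) := by
      refine Partrec.map (ihf.comp (Computable.fst.comp Computable.fst)
        (Primrec₂.natPair.to_comp.comp
        (Computable.fst.comp (Computable.unpair.comp (Computable.snd.comp Computable.fst)))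
        (Primrec.nat_add.to_comp.comp Computable.snd
          (Computable.snd.comp (Computable.unpair.comp (Computable.snd.comp Computable.fst)))))) ?_
      exact (Primrec.eq.comp Primrec.snd (Primrec.const 0)).decide.to_comp
    refine (Partrec.map (Partrec.rfind h1) (g := fun p m => m + p.2.unpair.2) ?_).of_eq ?_
    · exact Primrec.nat_add.to_comp.comp Computable.snd
        (Computable.snd.comp (Computable.unpair.comp (Computable.snd.comp Computable.fst)))
    · intro p
      simp only [peval, Nat.unpaired, Part.map_eq_map]

/-- Finite oracle. -/
def lo (l : List ℕ) : ℕ →. ℕ := fun n => (l[n]? : Option ℕ)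

theorem lo_partrec : Partrec₂ lo :=
  Computable.ofOption (Primrec.list_getElem?.to_comp)

theorem mem_oeval_iff (J : ℕ → ℕ) (c : OCode) (n v : ℕ) :
    v ∈ oeval J c n ↔ ∃ k, v ∈ peval (lo (pre J k)) c n := by
  rw [oeval_eq]
  constructor
  · intro h
    have := peval_ev (l := Filter.atTop) (Of := fun k => lo (pre J k))
      (O := fun n => Part.some (J n)) (by
        intro n v hv
        filter_upwards [Filter.eventually_gt_atTop n] with k hk
        rw [Part.mem_some_iff] at hv
        simp [lo, pre, hk, hv]) c n v h
    exact this.exists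
  · rintro ⟨k, hk⟩
    refine peval_mono ?_ c n v hk
    intro n v hv
    by_cases hn : n < k
    · simpa [lo, pre, hn] using hv
    · simp [lo, pre, hn] at hv

theorem re_mem {α : Type} [Primcodable α] {f : α →. ℕ} {e : α → ℕ} (hf : Partrec f)
    (he : Computable e) : REPred (fun a => e a ∈ f a) := by
  have h1 : Partrec (fun a => (f a).bind fun x =>
      ((if x = e a then some () else none : Option Unit) : Part Unit)) := by
    refine Partrec.bind hf (Computable.ofOption ?_)
    have h2 : Computable (fun p : α × ℕ => decide (p.2 = e p.1)) :=
      (Primrec.eq (α := ℕ)).decide.to_comp.comp (Computable.snd) (he.comp Computable.fst)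
    refine (Computable.cond h2 (Computable.const (some ())) (Computable.const none)).of_eq ?_
    intro p
    by_cases h : p.2 = e p.1 <;> simp [h]
  refine h1.dom_re.of_eq ?_
  intro a
  rw [Part.dom_iff_mem]
  simp only [Part.mem_bind_iff, Part.mem_ofOption]
  constructor
  · rintro ⟨_, x, hx, h⟩
    by_cases h' : x = e a
    · rwa [← h']
    · simp [h'] at h
  · intro h
    exact ⟨(), e a, h, by simp⟩

theorem sig_code (c : OCode) : Sig (fun (a : ℕ × Bool) (J : ℕ → ℕ) =>
    (cond a.2 1 0 : ℕ) ∈ oeval J c a.1) := by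
  refine (Sig.ofRE (W := fun p : (ℕ × Bool) × List ℕ =>
    (cond p.1.2 1 0 : ℕ) ∈ peval (lo p.2) c p.1.1) ?_).congr ?_
  · refine re_mem ?_ ?_
    · exact (peval_partrec lo_partrec c).comp Computable.snd (Computable.fst.comp Computable.fst)
    · exact Computable.cond (Computable.snd.comp Computable.fst) (Computable.const 1)
        (Computable.const 0)
  · intro a J
    rw [mem_oeval_iff]

theorem chi_mem (C : Set ℕ) (n : ℕ) (v : Bool) :
    (cond v 1 0 : ℕ) ∈ Part.some (chi C n) ↔ (v = true ↔ n ∈ C) := by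
  by_cases hn : n ∈ C <;> cases v <;> simp [chi, hn]

theorem nc_of {C : Set ℕ} {O J : ℕ → ℕ} (hO : NC C O) {h : ℕ × List ℕ → ℕ} (hh : Primrec h)
    (hJ : ∀ i, J i = h (i, pre O (i + 1))) : ¬ RecIn J (chi C) := by
  rintro ⟨c, hc⟩
  apply hO
  refine ⟨_, (sig_code c).subst (φ := id) Primrec.id
    (h := fun p : (ℕ × Bool) × ℕ × List ℕ => h p.2) (hh.comp Primrec.snd), ?_⟩
  intro n v
  have : (fun i => h (i, pre O (i + 1))) = J := funext fun i => (hJ i).symm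
  simp only [this, id, hc, chi_mem]

/-- List of the entries of a letter. -/
def lst {r : ℕ} (p : Fin 3 × YL r) : List ℕ := p.1.val :: List.ofFn (fun s => (p.2 s).val)

theorem lst_primrec {r : ℕ} : Primrec (lst (r := r)) := Primrec.dom_finite _

theorem solOracle_eq {r : ℕ} (X : SX) (Y : SY r) (n : ℕ) :
    solOracle X (fun s k => Y k s) n =
      (lst (X n.unpair.2, Y n.unpair.2)).getD n.unpair.1 0 := by
  unfold solOracle lst
  rcases hu : n.unpair.1 with _ | u
  · simp
  · simp only [Nat.succ_ne_zero, if_false, Nat.add_sub_cancel, List.getD_cons_succ]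
    by_cases h : u < r
    · simp [h]
    · simp [h]

theorem join_nc {r : ℕ} {C : Set ℕ} {O : ℕ → ℕ} {X0 W : SX} {Y0 Y1 : SY r} {ρ : List (Fin 3)}
    (h : NC C (jn (jn O X0 Y0) W Y1)) :
    ¬ RecIn (joinF (solOracle X0 (fun s k => Y0 k s))
      (solOracle (hx ρ X0 W) (fun s k => Y1 k s))) (chi C) := by
  let O2 := jn (jn O X0 Y0) W Y1
  have hj : Primrec (fun p : ℕ × List ℕ => (p.1 / 2).unpair) :=
    Primrec.unpair.comp (Primrec.nat_div.comp Primrec.fst (Primrec.const 2))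
  have hj1 : Primrec (fun p : ℕ × List ℕ => (p.1 / 2).unpair.1) := Primrec.fst.comp hj
  have hj2 : Primrec (fun p : ℕ × List ℕ => (p.1 / 2).unpair.2) := Primrec.snd.comp hj
  have ha : Primrec (fun p : ℕ × List ℕ =>
      decL (r := r) (p.2.getD (p.1 / 2).unpair.2 0)) :=
    decL_primrec.comp ((Primrec.list_getD 0).comp Primrec.snd hj2)
  have hb : Primrec (fun p : ℕ × List ℕ =>
      decL (r := r) (decL (r := r) (p.2.getD (p.1 / 2).unpair.2 0)).1) :=
    decL_primrec.comp (Primrec.fst.comp ha)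
  refine nc_of (O := O2) h (h := fun p => if p.1 % 2 = 0 then
      (lst (decL (r := r) (decL (r := r) (p.2.getD (p.1 / 2).unpair.2 0)).1).2).getD
        (p.1 / 2).unpair.1 0
    else (lst (ρ.getD (p.1 / 2).unpair.2
      (gx (decL (r := r) (decL (r := r) (p.2.getD (p.1 / 2).unpair.2 0)).1).2.1
        (decL (r := r) (p.2.getD (p.1 / 2).unpair.2 0)).2.1),
      (decL (r := r) (p.2.getD (p.1 / 2).unpair.2 0)).2.2)).getD (p.1 / 2).unpair.1 0) ?_ ?_
  · refine Primrec.ite (Primrec.eq.comp (Primrec.nat_mod.comp Primrec.fst (Primrec.const 2))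
      (Primrec.const 0)) ?_ ?_
    · exact (Primrec.list_getD 0).comp (lst_primrec.comp (Primrec.snd.comp hb)) hj1
    · refine (Primrec.list_getD 0).comp (lst_primrec.comp (Primrec.pair ?_
        (Primrec.snd.comp (Primrec.snd.comp ha)))) hj1
      exact getD_primrec _ hj2 (gx_primrec.comp (Primrec.fst.comp (Primrec.snd.comp hb))
        (Primrec.fst.comp (Primrec.snd.comp ha)))
  · intro i
    have hlt : (i / 2).unpair.2 < i + 1 :=
      Nat.lt_succ_of_le (le_trans (Nat.unpair_right_le _) (Nat.div_le_self _ _))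
    simp only [pre_getD O2 hlt]
    simp only [O2, jn, tri, decL_encL, joinF, solOracle_eq, hx]

theorem re_exists {α : Type} [Primcodable α] {R : α × ℕ → Prop} (hR : PrimrecPred R) :
    REPred (fun a => ∃ k, R (a, k)) := by
  obtain ⟨hd, hR⟩ := hR
  have h1 : Partrec (fun a => Nat.rfind (fun k => Part.some (decide (R (a, k))))) :=
    Partrec.rfind (p := fun a k => Part.some (decide (R (a, k)))) hR.to_comp.partrec
  refine h1.dom_re.of_eq ?_
  intro a
  refine Nat.rfind_dom.trans ⟨?_, ?_⟩
  · rintro ⟨k, hk, -⟩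
    exact ⟨k, by simpa using hk⟩
  · rintro ⟨k, hk⟩
    exact ⟨k, by simpa using hk, fun _ => trivial⟩

theorem code_to_ocode (O : ℕ → ℕ) (c : Nat.Partrec.Code) :
    ∃ d : OCode, oeval O d = Nat.Partrec.Code.eval c := by
  induction c with
  | zero => exact ⟨.zero, rfl⟩
  | succ => exact ⟨.succ, rfl⟩
  | left => exact ⟨.left, rfl⟩
  | right => exact ⟨.right, rfl⟩
  | pair a b iha ihb =>
    obtain ⟨d, hd⟩ := iha
    obtain ⟨e, he⟩ := ihb
    exact ⟨.pair d e, by simp only [oeval, Nat.Partrec.Code.eval, hd, he]; rfl⟩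
  | comp a b iha ihb =>
    obtain ⟨d, hd⟩ := iha
    obtain ⟨e, he⟩ := ihb
    exact ⟨.comp d e, by simp only [oeval, Nat.Partrec.Code.eval, hd, he]; rfl⟩
  | prec a b iha ihb =>
    obtain ⟨d, hd⟩ := iha
    obtain ⟨e, he⟩ := ihb
    exact ⟨.prec d e, by simp only [oeval, Nat.Partrec.Code.eval, hd, he]; rfl⟩
  | rfind' a iha =>
    obtain ⟨d, hd⟩ := iha
    exact ⟨.rfind' d, by simp only [oeval, Nat.Partrec.Code.eval, hd]; rfl⟩

theorem nc_zero {C : Set ℕ} (hC : ¬ RecIn zeroO (chi C)) : NC C zeroO := by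
  rintro ⟨U, ⟨R, hR, -, hU⟩, hUC⟩
  apply hC
  have hre : ∀ v : Bool, REPred (fun n => U (n, v) zeroO) := by
    intro v
    have h1 : PrimrecPred (fun p : ℕ × ℕ => R ((p.1, v), pre zeroO p.2)) := by
      refine hR.comp (Primrec.pair (Primrec.pair Primrec.fst (Primrec.const v)) ?_)
      exact Primrec.list_map (Primrec.list_range.comp Primrec.snd) (Primrec.const 0)
    exact (re_exists h1).of_eq fun n => (hU (n, v) zeroO).symm
  have hcp : ComputablePred (fun n => n ∈ C) := by
    rw [ComputablePred.computable_iff_re_compl_re']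
    exact ⟨(hre true).of_eq fun n => by rw [hUC]; simp,
      (hre false).of_eq fun n => by rw [hUC]; simp⟩
  obtain ⟨hd, hcp⟩ := hcp
  have h2 : Computable (chi C) := by
    refine (Computable.cond hcp (Computable.const 1) (Computable.const 0)).of_eq ?_
    intro n
    by_cases hn : n ∈ C <;> simp [chi, hn]
  obtain ⟨c, hc⟩ := Nat.Partrec.Code.exists_code.1 (Partrec.nat_iff.1 h2.partrec)
  obtain ⟨d, hd⟩ := code_to_ocode zeroO c
  refine ⟨d, fun n => ?_⟩
  rw [hd, hc]
  rfl

theorem recIn_zero {f : ℕ → ℕ} (h : RecIn zeroO f) : Computable f := by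
  obtain ⟨c, hc⟩ := h
  have := peval_partrec (α := Unit) (O := fun _ n => Part.some (zeroO n))
    (Computable.const 0).partrec c
  have h2 : Partrec (fun n : ℕ => peval (fun n => Part.some (zeroO n)) c n) :=
    this.comp (Computable.const ()) Computable.id
  refine h2.of_eq ?_
  intro n
  rw [← oeval_eq, hc]
  rfl

/-- Node of the cross-tree coded by a string. -/
def nodeOf {r : ℕ} (l : List (Lt r)) : Str3 × StrTup r :=
  (l.map fun x => x.2.1, fun s => l.map fun x => x.2.2 s)

theorem fin_encode (n : ℕ) (i : Fin n) : @Encodable.encode (Fin n) (Fin.encodable n) i =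
    @Encodable.encode (Fin n) Primcodable.toEncodable i := rfl

theorem encNode_primrec {r : ℕ} : Primrec (fun l : List (Lt r) => encNode (nodeOf l)) := by
  refine Primrec₂.natPair.comp ?_ ?_
  · have h1 : Primrec (fun l : List (Lt r) => l.map fun x => x.2.1) :=
      Primrec.list_map Primrec.id (Primrec.fst.comp (Primrec.snd.comp Primrec.snd))
    exact Primrec.encode.comp h1
  · have h1 : Primrec (fun l : List (Lt r) => List.ofFn fun s => l.map fun x => x.2.2 s) :=
      Primrec.list_ofFn fun s => Primrec.list_map Primrec.id
        ((ev_primrec s).comp (Primrec.snd.comp (Primrec.snd.comp Primrec.snd)))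
    exact Primrec.encode.comp h1

theorem encNode_inj {r : ℕ} {p q : Str3 × StrTup r} (h : encNode p = encNode q) : p = q := by
  unfold encNode at h
  rw [Nat.pair_eq_pair] at h
  exact Prod.ext (Encodable.encode_injective h.1)
    (List.ofFn_injective (Encodable.encode_injective h.2))

theorem paths_pi {r : ℕ} {T : CrossTree r} (hT : TreeComputable T) :
    PiC zeroO (fun X (Y : SY r) => IsPath T X (fun s k => Y k s)) := by
  have h0 := recIn_zero hT
  have h1 : ∀ p : Str3 × StrTup r, chi {n | ∃ p ∈ T.mem, encNode p = n} (encNode p) = 0 ↔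
      p ∉ T.mem := by
    intro p
    by_cases hp : p ∈ T.mem
    · have : encNode p ∈ {n | ∃ p ∈ T.mem, encNode p = n} := ⟨p, hp, rfl⟩
      rw [chi, Set.indicator_of_mem this]
      simp [hp]
    · have : encNode p ∉ {n | ∃ p ∈ T.mem, encNode p = n} := by
        rintro ⟨q, hq, h⟩
        rw [encNode_inj h] at hq
        exact hp hq
      rw [chi, Set.indicator_of_notMem this]
      simp [hp]
  have h2 : REPred (fun p : Unit × List (Lt r) => nodeOf p.2 ∉ T.mem) := by
    refine (re_mem (f := fun p : Unit × List (Lt r) => Part.some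
      (chi {n | ∃ p ∈ T.mem, encNode p = n} (encNode (nodeOf p.2)))) (e := fun _ => 0)
      (h0.comp (encNode_primrec.to_comp.comp Computable.snd)).partrec
      (Computable.const 0)).of_eq ?_
    intro p
    rw [Part.mem_some_iff, ← h1]
    exact eq_comm
  refine ⟨_, Sig.ofRE h2, ?_⟩
  intro X Y
  rw [not_exists]
  simp only [not_not, IsPath]
  refine forall_congr' fun n => ?_
  have : nodeOf (pre (tri zeroO X Y) n) = (seg X n, fun s => seg (fun k => Y k s) n) := by
    simp only [nodeOf, ← pre_eq_seg, pre, List.map_map]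
    rfl
  rw [this]

end Paper

namespace Paper

/-- Cross-constraint cone avoidance: for every non-computable set `C`, every left-full
computable instance of the cross-constraint problem has a solution whose join does
not compute `C`. -/
theorem cc_cone_avoidance (C : Set ℕ) (hC : ¬ RecIn zeroO (chi C))
    (r : ℕ) (T : CrossTree r) (hcomp : TreeComputable T) (hfull : LeftFull T) :
    ∃ (X : Fin 2 → ℕ → Fin 3) (Y : Fin 2 → Fin r → ℕ → Fin 2),
      CCSolution T X Y ∧
      ¬ RecIn (joinF (solOracle (X 0) (Y 0)) (solOracle (X 1) (Y 1))) (chi C) := by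
  have hF : Full (fun X (Y : SY r) => IsPath T X (fun s k => Y k s)) [] := by
    intro X _
    obtain ⟨Y, -, hY⟩ := hfull X (fun i => i.elim0)
    exact ⟨fun k s => Y s k, hY⟩
  obtain ⟨O, X0, Y0, W, Y1, ρ, h0, h1, hNC, hag⟩ := comb (nc_zero hC) (paths_pi hcomp) hF
  refine ⟨![X0, hx ρ X0 W], ![fun s k => Y0 k s, fun s k => Y1 k s], ⟨?_, ?_, ?_⟩, join_nc hNC⟩
  · intro i
    fin_cases i
    · exact h0
    · exact h1
  · intro j
    refine (Set.finite_lt_nat ρ.length).subset ?_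
    rintro n ⟨ha, hb⟩
    by_contra hn
    have hn' : ρ.length ≤ n := not_lt.1 hn
    refine gx_ne (X0 n) (W n) ?_
    rw [← hx_ge hn']
    exact hb.trans ha.symm
  · intro s
    have hinf : {k | Y1 k s = Y0 k s}.Infinite := by
      rw [Set.infinite_iff_exists_gt]
      intro m
      obtain ⟨k, hk, h⟩ := hag s (m + 1)
      exact ⟨k, h, hk⟩
    by_contra hcon
    push Not at hcon
    have hfin : ∀ j : Fin 2, {n | Y0 n s = j ∧ Y1 n s = j}.Finite := hcon
    refine hinf ((Set.finite_iUnion hfin).subset ?_)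
    intro k hk
    exact Set.mem_iUnion.2 ⟨Y0 k s, rfl, hk⟩

end Paper
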